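/- Among all trees T on n vertices with diameter greater than 3, the distance spectral radius of the complement satisfies λ_1(D(P_n^c)) ≤ λ_1(D(T^c)) ≤ λ_1(D(T(n−3,1)^c)), with equality on the left iff T ≅ P_n and on the right iff T ≅ T(n−3,1). -/

import Mathlib

open Matrix SimpleGraph
open scoped Classical

/-- The distance matrix of a simple graph, with real entries. -/
noncomputable def distMatrix {n : ℕ} (G : SimpleGraph (Fin n)) : Matrix (Fin n) (Fin n) ℝ :=
  fun i j => (G.dist i j : ℝ)

/-- `T(n-3,1)`: the tree obtained from a path on 3 vertices `0-1-2` by attaching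
`n - 3` pendant vertices to the endpoint `2`. -/
def broom (n : ℕ) : SimpleGraph (Fin n) :=
  SimpleGraph.fromRel (fun i j =>
    ((i : ℕ) = 0 ∧ (j : ℕ) = 1) ∨ ((i : ℕ) = 2 ∧ (j : ℕ) ≠ 2 ∧ (j : ℕ) ≠ 0))

/-!
Call an edge `uv` of `G` dominating if every vertex is adjacent to `u` or to `v`. If `G` has no such
edge, then two distinct vertices are at distance `2` in `Gᶜ` when they are adjacent in `G` and at
distance `1` otherwise, so `D(Gᶜ) + I = J + A(G)`. A dominating edge forces the diameter to be at
most `3`, so this applies to `T` and to `P_n`.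

For the lower bound, let `t` be the largest eigenvalue of `J + A` and `x` its positive eigenvector
with coordinate sum `1`, so that `t x = 1 + A x`. Iterating this equation gives
`1 = ∑ k, W_k / t ^ (k + 1)`, where `W_k` counts the walks of length `k`. All trees on `n` vertices
share `W_0` and `W_1`, a vertex of degree at least `3` makes `W_2` exceed its value for the path by
at least `2`, and a lower bound on `W_3` together with a geometric bound on the tail for the path
then separates the two eigenvalues.

For the upper bound, root `T` at a vertex `c` where the Perron vector `x` is largest, so that
`x · A x = 2 ∑ x_v x_{p v}` over the non-root vertices `v` with parents `p v`. Making every vertex a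
child of `c`, except for one vertex `w` that keeps its parent `p w ≠ c`, cannot decrease this sum
and produces the broom. The complement of the broom has a pair of vertices at distance `3`, which
makes the comparison of the distance matrices strict.
-/

section Rayleigh

variable {ι : Type*} [Fintype ι] {M : Matrix ι ι ℝ} {l : ℝ}

lemma dotProduct_mulVec_eq_sum (M : Matrix ι ι ℝ) (x y : ι → ℝ) :
    x ⬝ᵥ M *ᵥ y = ∑ i, ∑ j, M i j * (x i * y j) := by
  simp only [dotProduct, mulVec, Finset.mul_sum, mul_left_comm]

lemma dotProduct_mulVec_le_dotProduct_mulVec_abs (hM : ∀ i j, i ≠ j → 0 ≤ M i j) (x : ι → ℝ) :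
    x ⬝ᵥ M *ᵥ x ≤ |x| ⬝ᵥ M *ᵥ |x| := by
  rw [dotProduct_mulVec_eq_sum, dotProduct_mulVec_eq_sum]
  refine Finset.sum_le_sum fun i _ => Finset.sum_le_sum fun j _ => ?_
  rw [Pi.abs_apply, Pi.abs_apply, ← abs_mul]
  rcases eq_or_ne i j with rfl | hij
  · rw [abs_mul_self]
  · exact mul_le_mul_of_nonneg_left (le_abs_self _) (hM i j hij)

lemma pos_of_mulVec_eq_smul (hpos : ∀ i j, i ≠ j → 0 < M i j) {x : ι → ℝ} (hx0 : x ≠ 0)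
    (hnonneg : ∀ i, 0 ≤ x i) (hx : M *ᵥ x = l • x) (i : ι) : 0 < x i := by
  refine (hnonneg i).lt_of_ne' fun hi => ?_
  obtain ⟨k, hk⟩ := Function.ne_iff.1 hx0
  have hik : i ≠ k := by rintro rfl; exact hk hi
  have hsum : 0 < ∑ j, M i j * x j := by
    refine Finset.sum_pos' (fun j _ => ?_)
      ⟨k, Finset.mem_univ k, mul_pos (hpos i k hik) ((hnonneg k).lt_of_ne' hk)⟩
    rcases eq_or_ne i j with rfl | hij
    · rw [hi, mul_zero]
    · exact mul_nonneg (hpos i j hij).le (hnonneg j)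
  refine hsum.ne' ((congrFun hx i).trans ?_)
  rw [Pi.smul_apply, hi, smul_zero]

variable [DecidableEq ι]

lemma posSemidef_algebraMap_sub (hM : M.IsHermitian) (hl : l ∈ upperBounds (spectrum ℝ M)) :
    (algebraMap ℝ (Matrix ι ι ℝ) l - M).PosSemidef := by
  rw [posSemidef_iff_isHermitian_and_spectrum_nonneg]
  refine ⟨.sub ?_ hM, ?_⟩
  · exact isHermitian_diagonal _
  · rw [← spectrum.singleton_sub_eq]
    rintro _ ⟨_, rfl, μ, hμ, rfl⟩
    exact sub_nonneg.2 (hl hμ)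

lemma algebraMap_sub_mulVec (M : Matrix ι ι ℝ) (l : ℝ) (y : ι → ℝ) :
    (algebraMap ℝ (Matrix ι ι ℝ) l - M) *ᵥ y = l • y - M *ᵥ y := by
  rw [sub_mulVec, Algebra.algebraMap_eq_smul_one, smul_mulVec, one_mulVec]

lemma dotProduct_mulVec_le_of_mem_upperBounds_spectrum (hM : M.IsHermitian)
    (hl : l ∈ upperBounds (spectrum ℝ M)) (y : ι → ℝ) : y ⬝ᵥ M *ᵥ y ≤ l * (y ⬝ᵥ y) := by
  have h := (posSemidef_algebraMap_sub hM hl).dotProduct_mulVec_nonneg y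
  rwa [algebraMap_sub_mulVec, dotProduct_sub, dotProduct_smul, star_trivial, sub_nonneg] at h

lemma mulVec_eq_smul_of_le_dotProduct_mulVec (hM : M.IsHermitian)
    (hl : l ∈ upperBounds (spectrum ℝ M)) {y : ι → ℝ} (hy : l * (y ⬝ᵥ y) ≤ y ⬝ᵥ M *ᵥ y) :
    M *ᵥ y = l • y := by
  have hy' := dotProduct_mulVec_le_of_mem_upperBounds_spectrum hM hl y
  have h := ((posSemidef_algebraMap_sub hM hl).dotProduct_mulVec_zero_iff y).1
  rw [algebraMap_sub_mulVec, dotProduct_sub, dotProduct_smul, star_trivial, smul_eq_mul] at h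
  exact (sub_eq_zero.1 (h (by linarith))).symm

lemma exists_mulVec_eq_smul_of_mem_spectrum (hl : l ∈ spectrum ℝ M) :
    ∃ x : ι → ℝ, x ≠ 0 ∧ M *ᵥ x = l • x := by
  rw [← spectrum_toLin', ← Module.End.hasEigenvalue_iff_mem_spectrum] at hl
  obtain ⟨x, hx⟩ := hl.exists_hasEigenvector
  exact ⟨x, hx.2, hx.apply_eq_smul⟩

lemma mulVec_abs_eq_smul_abs (hM : M.IsHermitian) (hnonneg : ∀ i j, i ≠ j → 0 ≤ M i j)
    (hl : l ∈ upperBounds (spectrum ℝ M)) {x : ι → ℝ} (hx : M *ᵥ x = l • x) :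
    M *ᵥ |x| = l • |x| := by
  refine mulVec_eq_smul_of_le_dotProduct_mulVec hM hl ?_
  have habs : |x| ⬝ᵥ |x| = x ⬝ᵥ x := by simp [dotProduct]
  calc l * (|x| ⬝ᵥ |x|) = x ⬝ᵥ M *ᵥ x := by rw [hx, dotProduct_smul, smul_eq_mul, habs]
    _ ≤ |x| ⬝ᵥ M *ᵥ |x| := dotProduct_mulVec_le_dotProduct_mulVec_abs hnonneg x

lemma exists_pos_mulVec_eq_smul (hM : M.IsHermitian) (hpos : ∀ i j, i ≠ j → 0 < M i j)
    (hl : IsGreatest (spectrum ℝ M) l) :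
    ∃ x : ι → ℝ, (∀ i, 0 < x i) ∧ 1 ⬝ᵥ x = 1 ∧ M *ᵥ x = l • x := by
  obtain ⟨x, hx0, hx⟩ := exists_mulVec_eq_smul_of_mem_spectrum hl.1
  obtain ⟨k, hk⟩ := Function.ne_iff.1 hx0
  have habs : M *ᵥ |x| = l • |x| :=
    mulVec_abs_eq_smul_abs hM (fun i j hij => (hpos i j hij).le) hl.2 hx
  have habs0 : |x| ≠ 0 := fun h => hk (abs_eq_zero.1 (congrFun h k))
  have hxpos : ∀ i, 0 < |x| i := pos_of_mulVec_eq_smul hpos habs0 (fun i => abs_nonneg (x i)) habs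
  have hsum : 0 < 1 ⬝ᵥ |x| := by
    rw [one_dotProduct]
    exact Finset.sum_pos (fun i _ => hxpos i) ⟨k, Finset.mem_univ k⟩
  refine ⟨(1 ⬝ᵥ |x|)⁻¹ • |x|, fun i => mul_pos (inv_pos.2 hsum) (hxpos i), ?_, ?_⟩
  · rw [dotProduct_smul, smul_eq_mul, inv_mul_cancel₀ hsum.ne']
  · rw [mulVec_smul, habs, smul_comm]

end Rayleigh

section ComplementDistance

variable {V : Type*} {G : SimpleGraph V}

/-- An edge `uv` is dominating if every vertex is adjacent to `u` or to `v`. These are the edges of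
`G` whose ends have no common neighbor in the complement of `G`. -/
def HasDominatingEdge (G : SimpleGraph V) : Prop :=
  ∃ u v, G.Adj u v ∧ ∀ w, G.Adj u w ∨ G.Adj v w

lemma HasDominatingEdge.map_iso {W : Type*} {H : SimpleGraph W} (hG : HasDominatingEdge G)
    (e : G ≃g H) : HasDominatingEdge H := by
  obtain ⟨u, v, huv, hdom⟩ := hG
  refine ⟨e u, e v, e.map_adj_iff.2 huv, fun w => ?_⟩
  obtain ⟨w, rfl⟩ := e.surjective w
  simpa only [e.map_adj_iff] using hdom w

lemma HasDominatingEdge.dist_le_three (hG : HasDominatingEdge G) (a b : V) : G.dist a b ≤ 3 := by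
  obtain ⟨u, v, huv, hdom⟩ := hG
  rcases hdom a with ha | ha <;> rcases hdom b with hb | hb
  · exact (dist_le (.cons ha.symm (.cons hb .nil))).trans (by simp)
  · exact dist_le (.cons ha.symm (.cons huv (.cons hb .nil)))
  · exact dist_le (.cons ha.symm (.cons huv.symm (.cons hb .nil)))
  · exact (dist_le (.cons ha.symm (.cons hb .nil))).trans (by simp)

lemma HasDominatingEdge.exists_card_le_degree_add_degree [Fintype V] [DecidableRel G.Adj]
    (hG : HasDominatingEdge G) :
    ∃ u v, Fintype.card V ≤ G.degree u + G.degree v := by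
  classical
  obtain ⟨u, v, -, hdom⟩ := hG
  refine ⟨u, v, le_trans (Finset.card_le_card fun w _ => ?_)
    (Finset.card_union_le (G.neighborFinset u) (G.neighborFinset v))⟩
  simpa using hdom w

lemma dist_compl_eq_two_iff {u v : V} (huv : G.Adj u v) :
    Gᶜ.dist u v = 2 ↔ ∃ w, ¬ G.Adj u w ∧ ¬ G.Adj v w := by
  rw [SimpleGraph.dist, ENat.toNat_eq_iff two_ne_zero, Nat.cast_ofNat, edist_eq_two_iff]
  constructor
  · rintro ⟨-, -, w, huw, hvw⟩
    exact ⟨w, huw.2, hvw.2⟩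
  · rintro ⟨w, huw, hvw⟩
    refine ⟨huv.ne, fun h => h.2 huv, w, ⟨?_, huw⟩, ⟨?_, hvw⟩⟩
    · rintro rfl; exact hvw huv.symm
    · rintro rfl; exact huw huv

variable [DecidableEq V] [DecidableRel G.Adj]

/-- The matrix `J - I + A(G)`, with `J` the all-ones matrix. It is the distance matrix of the
complement of `G` as soon as that complement has diameter at most two. -/
def complDistMatrix (G : SimpleGraph V) [DecidableRel G.Adj] : Matrix V V ℝ :=
  vecMulVec 1 1 - 1 + G.adjMatrix ℝ

lemma complDistMatrix_mulVec [Fintype V] (x : V → ℝ) :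
    complDistMatrix G *ᵥ x = (1 ⬝ᵥ x) • 1 - x + G.adjMatrix ℝ *ᵥ x := by
  rw [complDistMatrix, add_mulVec, sub_mulVec, one_mulVec, vecMulVec_mulVec]
  simp

lemma complDistMatrix_self (v : V) : complDistMatrix G v v = 0 := by
  simp [complDistMatrix]

lemma complDistMatrix_of_adj {u v : V} (h : G.Adj u v) : complDistMatrix G u v = 2 := by
  simp [complDistMatrix, h.ne, h, one_add_one_eq_two]

lemma complDistMatrix_of_not_adj {u v : V} (huv : u ≠ v) (h : ¬ G.Adj u v) :
    complDistMatrix G u v = 1 := by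
  simp [complDistMatrix, huv, h]

lemma dist_compl_eq_complDistMatrix (hG : ¬ HasDominatingEdge G) (u v : V) :
    (Gᶜ.dist u v : ℝ) = complDistMatrix G u v := by
  rcases eq_or_ne u v with rfl | huv
  · rw [SimpleGraph.dist_self, Nat.cast_zero, complDistMatrix_self]
  by_cases h : G.Adj u v
  · have hdist : Gᶜ.dist u v = 2 := (dist_compl_eq_two_iff h).2 <| by
      by_contra! hdom
      exact hG ⟨u, v, h, fun w => or_iff_not_imp_left.2 (hdom w)⟩
    rw [hdist, Nat.cast_ofNat, complDistMatrix_of_adj h]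
  · have hdist : Gᶜ.dist u v = 1 := dist_eq_one_iff_adj.2 ⟨huv, h⟩
    rw [hdist, Nat.cast_one, complDistMatrix_of_not_adj huv h]

lemma complDistMatrix_le_dist_compl (hc : Gᶜ.Connected) (u v : V) :
    complDistMatrix G u v ≤ Gᶜ.dist u v := by
  rcases eq_or_ne u v with rfl | huv
  · rw [SimpleGraph.dist_self, Nat.cast_zero, complDistMatrix_self]
  by_cases h : G.Adj u v
  · rw [complDistMatrix_of_adj h]
    exact_mod_cast hc.one_lt_dist_of_ne_of_not_adj huv fun h' => h'.2 h
  · rw [complDistMatrix_of_not_adj huv h]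
    exact_mod_cast hc.pos_dist_of_ne huv

lemma HasDominatingEdge.exists_complDistMatrix_lt_dist_compl (hG : HasDominatingEdge G)
    (hc : Gᶜ.Connected) : ∃ u v, complDistMatrix G u v < Gᶜ.dist u v := by
  obtain ⟨u, v, huv, hdom⟩ := hG
  refine ⟨u, v, (complDistMatrix_le_dist_compl hc u v).lt_of_ne fun heq => ?_⟩
  rw [complDistMatrix_of_adj huv] at heq
  obtain ⟨w, huw, hvw⟩ := (dist_compl_eq_two_iff huv).1 (by exact_mod_cast heq.symm)
  exact (hdom w).elim huw hvw

lemma HasDominatingEdge.dotProduct_complDistMatrix_mulVec_lt [Fintype V] (hG : HasDominatingEdge G)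
    (hc : Gᶜ.Connected) {x : V → ℝ} (hx : ∀ v, 0 < x v) :
    x ⬝ᵥ complDistMatrix G *ᵥ x < x ⬝ᵥ (of fun u v => (Gᶜ.dist u v : ℝ)) *ᵥ x := by
  obtain ⟨u, v, huv⟩ := hG.exists_complDistMatrix_lt_dist_compl hc
  have hle (i j : V) : complDistMatrix G i j * (x i * x j) ≤ Gᶜ.dist i j * (x i * x j) :=
    mul_le_mul_of_nonneg_right (complDistMatrix_le_dist_compl hc i j)
      (mul_pos (hx i) (hx j)).le
  rw [dotProduct_mulVec_eq_sum, dotProduct_mulVec_eq_sum]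
  refine Finset.sum_lt_sum (fun i _ => Finset.sum_le_sum fun j _ => hle i j)
    ⟨u, Finset.mem_univ u, Finset.sum_lt_sum (fun j _ => hle u j) ⟨v, Finset.mem_univ v, ?_⟩⟩
  exact mul_lt_mul_of_pos_right huv (mul_pos (hx u) (hx v))

end ComplementDistance

section PerronVector

variable {V : Type*} [Fintype V] {G : SimpleGraph V} [DecidableRel G.Adj]

/-- `x` is the positive eigenvector, with coordinates summing to `1`, of `J + A(G)` for the
eigenvalue `t`. When `G` has no dominating edge, `t - 1` is the distance spectral radius of `Gᶜ`. -/
structure IsPerronVector (G : SimpleGraph V) [DecidableRel G.Adj] (t : ℝ) (x : V → ℝ) : Prop where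
  pos : ∀ v, 0 < x v
  sum_eq_one : 1 ⬝ᵥ x = 1
  smul_eq : t • x = 1 + G.adjMatrix ℝ *ᵥ x

lemma isHermitian_distMatrix {n : ℕ} (G : SimpleGraph (Fin n)) : (distMatrix G).IsHermitian := by
  ext i j
  simp [distMatrix, SimpleGraph.dist_comm]

lemma distMatrix_compl_eq_complDistMatrix {n : ℕ} {G : SimpleGraph (Fin n)} [DecidableRel G.Adj]
    (hG : ¬ HasDominatingEdge G) : distMatrix Gᶜ = complDistMatrix G :=
  Matrix.ext (dist_compl_eq_complDistMatrix hG)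

lemma exists_isPerronVector {n : ℕ} {G : SimpleGraph (Fin n)} [DecidableRel G.Adj]
    (hG : ¬ HasDominatingEdge G) {l : ℝ} (hl : IsGreatest (spectrum ℝ (distMatrix Gᶜ)) l) :
    ∃ x, IsPerronVector G (l + 1) x := by
  have hpos (i j : Fin n) (hij : i ≠ j) : 0 < distMatrix Gᶜ i j := by
    rw [distMatrix_compl_eq_complDistMatrix hG]
    by_cases h : G.Adj i j
    · rw [complDistMatrix_of_adj h]; exact two_pos
    · rw [complDistMatrix_of_not_adj hij h]; exact one_pos
  obtain ⟨x, hx, hsum, heig⟩ := exists_pos_mulVec_eq_smul (isHermitian_distMatrix Gᶜ) hpos hl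
  rw [distMatrix_compl_eq_complDistMatrix hG, complDistMatrix_mulVec, hsum, one_smul] at heig
  refine ⟨x, hx, hsum, ?_⟩
  rw [add_smul, one_smul, ← heig]
  abel

lemma one_dotProduct_adjMatrix_mulVec (y : V → ℝ) :
    1 ⬝ᵥ G.adjMatrix ℝ *ᵥ y = ∑ v, G.degree v * y v := by
  rw [dotProduct_mulVec]
  refine Finset.sum_congr rfl fun v _ => ?_
  rw [adjMatrix_vecMul_apply]
  simp

lemma IsPerronVector.eigenvalue_pos {t : ℝ} {x : V → ℝ} (hx : IsPerronVector G t x) : 0 < t := by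
  have : Nonempty V := by
    by_contra hV
    rw [not_nonempty_iff] at hV
    exact one_ne_zero (hx.sum_eq_one.symm.trans (dotProduct_of_isEmpty _ _))
  obtain ⟨v⟩ := this
  have hv : t * x v = 1 + (G.adjMatrix ℝ *ᵥ x) v := congrFun hx.smul_eq v
  have hA : 0 ≤ (G.adjMatrix ℝ *ᵥ x) v := by
    rw [adjMatrix_mulVec_apply]
    exact Finset.sum_nonneg fun w _ => (hx.pos w).le
  exact pos_of_mul_pos_left (by linarith) (hx.pos v).le

variable [DecidableEq V]

/-- The number of walks of length `k` in `G`, as a real number. -/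
def walkCount (G : SimpleGraph V) [DecidableRel G.Adj] (k : ℕ) : ℝ :=
  1 ⬝ᵥ G.adjMatrix ℝ ^ k *ᵥ 1

lemma adjMatrix_pow_mulVec_nonneg {y : V → ℝ} (hy : ∀ v, 0 ≤ y v) (k : ℕ) (v : V) :
    0 ≤ (G.adjMatrix ℝ ^ k *ᵥ y) v := by
  have hA (w : V) : 0 ≤ (G.adjMatrix ℝ ^ k) v w := by
    rw [adjMatrix_pow_apply_eq_card_walk]
    exact Nat.cast_nonneg _
  exact Finset.sum_nonneg fun w _ => mul_nonneg (hA w) (hy w)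

lemma walkCount_nonneg (k : ℕ) : 0 ≤ walkCount G k := by
  rw [walkCount, one_dotProduct]
  exact Finset.sum_nonneg fun v _ => adjMatrix_pow_mulVec_nonneg (fun _ => zero_le_one) k v

namespace IsPerronVector

variable {t : ℝ} {x : V → ℝ}

lemma mul_dotProduct_pow (hx : IsPerronVector G t x) (k : ℕ) :
    t * (1 ⬝ᵥ G.adjMatrix ℝ ^ k *ᵥ x) = walkCount G k + 1 ⬝ᵥ G.adjMatrix ℝ ^ (k + 1) *ᵥ x := by
  rw [← smul_eq_mul, ← dotProduct_smul, ← mulVec_smul, hx.smul_eq, mulVec_add, dotProduct_add,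
    mulVec_mulVec, ← pow_succ, walkCount]

lemma dotProduct_pow_nonneg (hx : IsPerronVector G t x) (k : ℕ) :
    0 ≤ 1 ⬝ᵥ G.adjMatrix ℝ ^ k *ᵥ x := by
  rw [one_dotProduct]
  exact Finset.sum_nonneg fun v _ => adjMatrix_pow_mulVec_nonneg (fun w => (hx.pos w).le) k v

lemma sum_walkCount_div_add (hx : IsPerronVector G t x) (m : ℕ) :
    ∑ k ∈ Finset.range m, walkCount G k / t ^ (k + 1) + (1 ⬝ᵥ G.adjMatrix ℝ ^ m *ᵥ x) / t ^ m
      = 1 := by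
  have ht := hx.eigenvalue_pos.ne'
  induction m with
  | zero => simp [hx.sum_eq_one]
  | succ m ih =>
    rw [Finset.sum_range_succ, add_assoc, ← add_div, ← hx.mul_dotProduct_pow, pow_succ',
      mul_div_mul_left _ _ ht, ih]

lemma sum_walkCount_div_le_one (hx : IsPerronVector G t x) {s : ℝ} (hts : t ≤ s) (m : ℕ) :
    ∑ k ∈ Finset.range m, walkCount G k / s ^ (k + 1) ≤ 1 := by
  have ht := hx.eigenvalue_pos
  have hrem := div_nonneg (hx.dotProduct_pow_nonneg m) (pow_pos ht m).le
  calc ∑ k ∈ Finset.range m, walkCount G k / s ^ (k + 1)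
      ≤ ∑ k ∈ Finset.range m, walkCount G k / t ^ (k + 1) := by
        gcongr with k _
        exact walkCount_nonneg k
    _ ≤ 1 := by linarith [hx.sum_walkCount_div_add m]

lemma sub_mul_dotProduct_pow_le (hx : IsPerronVector G t x) {Δ : ℝ} (hΔ : ∀ v, G.degree v ≤ Δ)
    (k : ℕ) : (t - Δ) * (1 ⬝ᵥ G.adjMatrix ℝ ^ k *ᵥ x) ≤ walkCount G k := by
  have hstep : 1 ⬝ᵥ G.adjMatrix ℝ ^ (k + 1) *ᵥ x ≤ Δ * (1 ⬝ᵥ G.adjMatrix ℝ ^ k *ᵥ x) := by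
    rw [pow_succ', ← mulVec_mulVec, one_dotProduct_adjMatrix_mulVec, one_dotProduct,
      Finset.mul_sum]
    exact Finset.sum_le_sum fun v _ => mul_le_mul_of_nonneg_right (hΔ v)
      (adjMatrix_pow_mulVec_nonneg (fun w => (hx.pos w).le) k v)
  linarith [hx.mul_dotProduct_pow k]

lemma one_le_sum_walkCount_div_add (hx : IsPerronVector G t x) {Δ : ℝ}
    (hΔ : ∀ v, G.degree v ≤ Δ) (ht : Δ < t) (m : ℕ) :
    1 ≤ ∑ k ∈ Finset.range m, walkCount G k / t ^ (k + 1)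
      + walkCount G m / (t ^ m * (t - Δ)) := by
  rw [← hx.sum_walkCount_div_add m, mul_comm, ← div_div]
  gcongr
  · exact pow_nonneg hx.eigenvalue_pos.le m
  · rw [le_div_iff₀' (sub_pos.2 ht)]
    exact hx.sub_mul_dotProduct_pow_le hΔ m

end IsPerronVector

end PerronVector

section WalkCount

variable {V : Type*} [Fintype V] {G : SimpleGraph V} [DecidableRel G.Adj]

lemma sub_one_mul_sub_two_nonneg (d : ℕ) : 0 ≤ ((d : ℝ) - 1) * (d - 2) := by
  rcases le_or_gt d 1 with hd | hd
  · interval_cases d <;> norm_num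
  · have : (2 : ℝ) ≤ d := by exact_mod_cast hd
    nlinarith

lemma sum_sum_neighborFinset_add (f : V → ℝ) :
    ∑ v, ∑ w ∈ G.neighborFinset v, (f v + f w) = 2 * ∑ v, G.degree v * f v := by
  have h := one_dotProduct_adjMatrix_mulVec (G := G) f
  simp only [one_dotProduct, adjMatrix_mulVec_apply] at h
  simp only [Finset.sum_add_distrib, h, Finset.sum_const, card_neighborFinset_eq_degree,
    nsmul_eq_mul, two_mul]

lemma one_lt_degree_or_one_lt_degree (hG : G.Connected) (hcard : 3 ≤ Fintype.card V) {u v : V}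
    (huv : G.Adj u v) : 1 < G.degree u ∨ 1 < G.degree v := by
  classical
  obtain ⟨w, hw⟩ : ∃ w, w ∉ ({u, v} : Finset V) := by
    by_contra! h
    have := Finset.card_le_card fun w (_ : w ∈ Finset.univ) => h w
    have := Finset.card_le_two (a := u) (b := v)
    rw [Finset.card_univ] at *
    omega
  obtain ⟨p⟩ := hG u w
  obtain ⟨d, -, hfst, hsnd⟩ :=
    p.exists_boundary_dart ({u, v} : Finset V) (Finset.mem_insert_self u _) hw
  have hdeg {a b : V} (hab : G.Adj a b) (hd : d.fst = a) (hb : d.snd ≠ b) : 1 < G.degree a := by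
    rw [← card_neighborFinset_eq_degree, Finset.one_lt_card]
    exact ⟨b, (mem_neighborFinset _ _ _).2 hab, d.snd, by simp [← hd], hb.symm⟩
  simp only [Finset.coe_insert, Finset.coe_singleton, Set.mem_insert_iff, Set.mem_singleton_iff,
    not_or] at hfst hsnd
  exact hfst.imp (fun h => hdeg huv h hsnd.2) (fun h => hdeg huv.symm h hsnd.1)

variable [DecidableEq V]

lemma walkCount_zero : walkCount G 0 = Fintype.card V := by
  simp [walkCount]

lemma walkCount_one : walkCount G 1 = ∑ v, (G.degree v : ℝ) := by
  simp [walkCount, one_dotProduct_adjMatrix_mulVec]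

lemma walkCount_two : walkCount G 2 = ∑ v, (G.degree v : ℝ) ^ 2 := by
  rw [walkCount, pow_two, ← mulVec_mulVec, one_dotProduct_adjMatrix_mulVec]
  simp [adjMatrix_mulVec_apply, pow_two]

lemma walkCount_three :
    walkCount G 3 = ∑ v, ∑ w ∈ G.neighborFinset v, (G.degree v : ℝ) * G.degree w := by
  rw [walkCount, pow_succ, pow_two, ← mulVec_mulVec, ← mulVec_mulVec,
    one_dotProduct_adjMatrix_mulVec]
  simp [adjMatrix_mulVec_apply, Finset.mul_sum]

lemma walkCount_one_of_isTree (hG : G.IsTree) : walkCount G 1 = 2 * Fintype.card V - 2 := by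
  have hsum := G.sum_degrees_eq_twice_card_edges
  have hcard := hG.card_edgeFinset
  rw [walkCount_one, ← Nat.cast_sum, hsum, ← hcard]
  push_cast
  ring

lemma walkCount_two_of_isTree (hG : G.IsTree) :
    walkCount G 2 = 4 * Fintype.card V - 6 + ∑ v, ((G.degree v : ℝ) - 1) * (G.degree v - 2) := by
  have h1 := walkCount_one_of_isTree hG
  rw [walkCount_one] at h1
  have h : ∑ v, ((G.degree v : ℝ) - 1) * (G.degree v - 2)
      = ∑ v, (G.degree v : ℝ) ^ 2 - 3 * ∑ v, (G.degree v : ℝ) + 2 * Fintype.card V := by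
    rw [Finset.mul_sum, ← Finset.sum_sub_distrib]
    have : (2 : ℝ) * Fintype.card V = ∑ _v : V, 2 := by simp [mul_comm]
    rw [this, ← Finset.sum_add_distrib]
    exact Finset.sum_congr rfl fun v _ => by ring
  rw [walkCount_two, h, h1]
  ring

lemma le_walkCount_two_of_three_le_degree (hG : G.IsTree) {v : V} (hv : 3 ≤ G.degree v) :
    4 * Fintype.card V - 4 ≤ walkCount G 2 := by
  have hterm := Finset.single_le_sum (f := fun v => ((G.degree v : ℝ) - 1) * (G.degree v - 2))
    (fun w _ => sub_one_mul_sub_two_nonneg (G.degree w)) (Finset.mem_univ v)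
  have hv' : (3 : ℝ) ≤ G.degree v := by exact_mod_cast hv
  rw [walkCount_two_of_isTree hG]
  nlinarith

lemma walkCount_two_of_degree_le_two [Nontrivial V] (hG : G.IsTree) (hdeg : ∀ v, G.degree v ≤ 2) :
    walkCount G 2 = 4 * Fintype.card V - 6 := by
  rw [walkCount_two_of_isTree hG, Finset.sum_eq_zero, add_zero]
  intro v _
  have hpos := hG.connected.preconnected.degree_pos_of_nontrivial v
  have hv : G.degree v = 1 ∨ G.degree v = 2 := by have := hdeg v; omega
  rcases hv with hv | hv <;> simp [hv]

lemma walkCount_three_of_degree_le_two (hG : G.IsTree) (hcard : 3 ≤ Fintype.card V)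
    (hdeg : ∀ v, G.degree v ≤ 2) : walkCount G 3 = 8 * Fintype.card V - 16 := by
  have : Nontrivial V := Fintype.one_lt_card_iff_nontrivial.1 (by omega)
  have hedge (v w : V) (hvw : w ∈ G.neighborFinset v) :
      (G.degree v : ℝ) * G.degree w = (2 * G.degree v - 2) + (2 * G.degree w - 2) := by
    have hv := hdeg v
    have hw := hdeg w
    rcases one_lt_degree_or_one_lt_degree hG.connected hcard
      ((mem_neighborFinset _ _ _).1 hvw) with h | h
    · rw [show G.degree v = 2 by omega]; push_cast; ring
    · rw [show G.degree w = 2 by omega]; push_cast; ring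
  have hsum : ∑ v, (G.degree v : ℝ) * (2 * G.degree v - 2)
      = 2 * walkCount G 2 - 2 * walkCount G 1 := by
    rw [walkCount_one, walkCount_two, Finset.mul_sum, Finset.mul_sum, ← Finset.sum_sub_distrib]
    exact Finset.sum_congr rfl fun v _ => by ring
  rw [walkCount_three, Finset.sum_congr rfl fun v _ => Finset.sum_congr rfl (hedge v),
    sum_sum_neighborFinset_add, hsum, walkCount_two_of_degree_le_two hG hdeg,
    walkCount_one_of_isTree hG]
  ring

lemma walkCount_two_add_le_walkCount_three (hG : G.IsTree) :
    walkCount G 2 + 4 * Fintype.card V - 10 ≤ walkCount G 3 := by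
  -- `g a + g b ≤ a * b` is an equality when `a = b = 2` or exactly one of `a`, `b` is `1`, so
  -- bounding the product of the end degrees of every edge this way loses little.
  let g (d : ℕ) : ℝ := if d = 1 then 0 else d
  have hmul (a b : ℕ) (ha : 0 < a) (hb : 0 < b) : g a + g b ≤ a * b := by
    by_cases ha1 : a = 1 <;> by_cases hb1 : b = 1 <;> simp only [g, ha1, hb1, if_true, if_false]
    · norm_num
    · simp
    · simp
    · have ha2 : (2 : ℝ) ≤ a := by exact_mod_cast (show 2 ≤ a by omega)
      have hb2 : (2 : ℝ) ≤ b := by exact_mod_cast (show 2 ≤ b by omega)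
      nlinarith
  have hself (a : ℕ) : (a : ℝ) ^ 2 + 5 * a - 6 ≤ 2 * (a * g a) := by
    rcases lt_or_ge a 3 with ha | ha
    · interval_cases a <;> norm_num [g]
    · have ha' : (3 : ℝ) ≤ a := by exact_mod_cast ha
      simp only [g, show a ≠ 1 by omega, if_false]
      nlinarith
  have hdeg {v w : V} (h : G.Adj v w) : 0 < G.degree v := (G.degree_pos_iff_exists_adj v).2 ⟨w, h⟩
  calc walkCount G 2 + 4 * Fintype.card V - 10
      = ∑ v, ((G.degree v : ℝ) ^ 2 + 5 * G.degree v - 6) := by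
        rw [Finset.sum_sub_distrib, Finset.sum_add_distrib, ← Finset.mul_sum, ← walkCount_one,
          ← walkCount_two, walkCount_one_of_isTree hG, Finset.sum_const, Finset.card_univ,
          nsmul_eq_mul]
        ring
    _ ≤ ∑ v, 2 * (G.degree v * g (G.degree v)) := Finset.sum_le_sum fun v _ => hself _
    _ = ∑ v, ∑ w ∈ G.neighborFinset v, (g (G.degree v) + g (G.degree w)) := by
        rw [sum_sum_neighborFinset_add fun v => g (G.degree v), Finset.mul_sum]
    _ ≤ walkCount G 3 := by
        rw [walkCount_three]
        refine Finset.sum_le_sum fun v _ => Finset.sum_le_sum fun w hw => ?_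
        rw [mem_neighborFinset] at hw
        exact hmul _ _ (hdeg hw) (hdeg hw.symm)

end WalkCount

section PathGraph

variable {V : Type*} {G : SimpleGraph V}

lemma exists_adj_dist_eq_dist_add_one (hG : G.Connected) {c v : V} (hv : v ≠ c) :
    ∃ p, G.Adj v p ∧ G.dist c v = G.dist c p + 1 := by
  obtain ⟨w, hw⟩ := hG.exists_walk_length_eq_dist v c
  cases w with
  | nil => exact absurd rfl hv
  | @cons _ p _ hvp q =>
    refine ⟨p, hvp, le_antisymm ?_ ?_⟩
    · exact (hG.dist_triangle (v := p)).trans_eq (by rw [dist_eq_one_iff_adj.2 hvp.symm])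
    · rw [G.dist_comm (v := v), ← hw, Walk.length_cons, G.dist_comm (v := p)]
      exact Nat.succ_le_succ (dist_le q)

variable [Fintype V]

lemma dist_lt_card (hG : G.Connected) (u v : V) : G.dist u v < Fintype.card V := by
  obtain ⟨p, hp, hlen⟩ := hG.exists_path_of_dist u v
  exact hlen ▸ hp.length_lt

variable [DecidableRel G.Adj]

lemma eq_of_adj_of_dist_eq_dist_add_one (hG : G.Connected) (hdeg : ∀ v, G.degree v ≤ 2) {u : V}
    (hu : G.degree u = 1) {p v w : V} (hv : G.Adj p v) (hw : G.Adj p w)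
    (hdv : G.dist u v = G.dist u p + 1) (hdw : G.dist u w = G.dist u p + 1) : v = w := by
  classical
  by_contra hvw
  rcases eq_or_ne p u with rfl | hpu
  · have hsub : ({v, w} : Finset V) ⊆ G.neighborFinset p := by
      simp [Finset.insert_subset_iff, hv, hw]
    have := Finset.card_le_card hsub
    rw [Finset.card_pair hvw, card_neighborFinset_eq_degree] at this
    omega
  · obtain ⟨r, hr, hdr⟩ := exists_adj_dist_eq_dist_add_one hG hpu
    have hsub : ({v, w, r} : Finset V) ⊆ G.neighborFinset p := by
      simp [Finset.insert_subset_iff, hv, hw, hr]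
    have hvr : v ≠ r := by rintro rfl; omega
    have hwr : w ≠ r := by rintro rfl; omega
    have := Finset.card_le_card hsub
    rw [Finset.card_eq_three.2 ⟨v, w, r, hvw, hvr, hwr, rfl⟩, card_neighborFinset_eq_degree] at this
    exact absurd (hdeg p) (by omega)

lemma dist_injective_of_degree_le_two (hG : G.Connected) (hdeg : ∀ v, G.degree v ≤ 2) {u : V}
    (hu : G.degree u = 1) : Function.Injective (G.dist u) := by
  suffices h : ∀ k v w, G.dist u v = k → G.dist u w = k → v = w from
    fun v w hvw => h _ v w hvw rfl
  intro k
  induction k with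
  | zero =>
    intro v w hv hw
    rw [← hG.dist_eq_zero_iff.1 hv, ← hG.dist_eq_zero_iff.1 hw]
  | succ k ih =>
    have hne {v : V} (hv : G.dist u v = k + 1) : v ≠ u := by
      rintro rfl
      simp at hv
    intro v w hv hw
    obtain ⟨p, hvp, hdp⟩ := exists_adj_dist_eq_dist_add_one hG (hne hv)
    obtain ⟨q, hwq, hdq⟩ := exists_adj_dist_eq_dist_add_one hG (hne hw)
    obtain rfl : p = q := ih p q (by omega) (by omega)
    exact eq_of_adj_of_dist_eq_dist_add_one hG hdeg hu hvp.symm hwq.symm hdp hdq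

lemma nonempty_iso_pathGraph_of_connected (hG : G.Connected) (hdeg : ∀ v, G.degree v ≤ 2) {u : V}
    (hu : G.degree u = 1) : Nonempty (G ≃g pathGraph (Fintype.card V)) := by
  have hinj := dist_injective_of_degree_le_two hG hdeg hu
  let f (v : V) : Fin (Fintype.card V) := ⟨G.dist u v, dist_lt_card hG u v⟩
  have hf : Function.Bijective f := (Fintype.bijective_iff_injective_and_card f).2
    ⟨fun v w hvw => hinj (Fin.mk.inj hvw), (Fintype.card_fin _).symm⟩
  have hadj {v w : V} (hvw : G.dist u v + 1 = G.dist u w) : G.Adj v w := by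
    have hwu : w ≠ u := by
      rintro rfl
      simp at hvw
    obtain ⟨p, hwp, hp⟩ := exists_adj_dist_eq_dist_add_one hG hwu
    obtain rfl : p = v := hinj (by omega)
    exact hwp.symm
  refine ⟨⟨Equiv.ofBijective f hf, fun {v w} => ?_⟩⟩
  rw [pathGraph_adj]
  refine ⟨fun h => h.elim hadj fun h => (hadj h).symm, fun (h : G.Adj v w) => ?_⟩
  have hne : G.dist u v ≠ G.dist u w := hinj.ne h.ne
  have hdist := h.diff_dist_adj (u := u)
  change G.dist u v + 1 = G.dist u w ∨ G.dist u w + 1 = G.dist u v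
  omega

lemma nonempty_iso_pathGraph_of_isTree [Nontrivial V] (hG : G.IsTree) (hdeg : ∀ v, G.degree v ≤ 2) :
    Nonempty (G ≃g pathGraph (Fintype.card V)) := by
  obtain ⟨u, hu⟩ := hG.exists_vert_degree_one_of_nontrivial
  exact nonempty_iso_pathGraph_of_connected hG.connected hdeg hu

lemma degree_pathGraph_le_two {n : ℕ} [DecidableRel (pathGraph n).Adj] (v : Fin n) :
    (pathGraph n).degree v ≤ 2 := by
  rw [← card_neighborFinset_eq_degree]
  refine (Finset.card_le_card_of_injOn Fin.val (t := {(v : ℕ) + 1, (v : ℕ) - 1}) ?_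
    Fin.val_injective.injOn).trans Finset.card_le_two
  intro w hw
  have hvw : (pathGraph n).Adj v w := by simpa using hw
  rw [pathGraph_adj] at hvw
  simp only [Finset.coe_insert, Finset.coe_singleton, Set.mem_insert_iff, Set.mem_singleton_iff]
  omega

lemma isTree_pathGraph {n : ℕ} [Nontrivial (Fin n)] : (pathGraph n).IsTree := by
  classical
  have hconn : (pathGraph n).Connected := ⟨pathGraph_preconnected n⟩
  obtain ⟨T, hle, hT⟩ := hconn.exists_isTree_le
  have hdeg (v : Fin n) : T.degree v ≤ 2 :=
    (degree_le_of_le hle).trans (degree_pathGraph_le_two v)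
  obtain ⟨e⟩ := nonempty_iso_pathGraph_of_isTree hT hdeg
  rw [Fintype.card_fin] at e
  exact e.isTree_iff.1 hT

lemma not_hasDominatingEdge_pathGraph {n : ℕ} (hn : 5 ≤ n) :
    ¬ HasDominatingEdge (pathGraph n) := fun h => by
  classical
  obtain ⟨u, v, huv⟩ := h.exists_card_le_degree_add_degree
  have hu := degree_pathGraph_le_two u
  have hv := degree_pathGraph_le_two v
  rw [Fintype.card_fin] at huv
  omega

end PathGraph

section PathComparison

variable {V W : Type*} [Fintype V] [Fintype W] {G : SimpleGraph V} {H : SimpleGraph W}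
  [DecidableRel G.Adj] [DecidableRel H.Adj] {s t : ℝ} {x : V → ℝ} {y : W → ℝ}

lemma IsPerronVector.card_add_one_le (hx : IsPerronVector G t x) (hG : G.IsTree)
    (hcard : 3 ≤ Fintype.card V) : Fintype.card V + 1 ≤ t := by
  classical
  have ht := hx.eigenvalue_pos
  have hn : (3 : ℝ) ≤ Fintype.card V := by exact_mod_cast hcard
  have h := hx.sum_walkCount_div_le_one le_rfl 2
  have hquad : Fintype.card V * t + (2 * Fintype.card V - 2) ≤ t ^ 2 := by
    rw [Finset.sum_range_succ, Finset.sum_range_one, walkCount_zero,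
      walkCount_one_of_isTree hG] at h
    calc Fintype.card V * t + (2 * Fintype.card V - 2)
        = t ^ 2 * (Fintype.card V / t ^ (0 + 1) + (2 * Fintype.card V - 2) / t ^ (1 + 1)) := by
          simp only [zero_add, pow_one, one_add_one_eq_two]
          field_simp
      _ ≤ t ^ 2 := mul_le_of_le_one_right (sq_nonneg t) h
  nlinarith

lemma IsPerronVector.walkCount_sub_mul_add_le_of_le [DecidableEq V] [DecidableEq W]
    (hx : IsPerronVector G t x) (hy : IsPerronVector H s y) (hdeg : ∀ v, G.degree v ≤ 2)
    (ht : 2 < t) (hst : s ≤ t) (h0 : walkCount G 0 = walkCount H 0)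
    (h1 : walkCount G 1 = walkCount H 1) :
    (walkCount H 2 - walkCount G 2) * t * (t - 2) + walkCount H 3 * (t - 2)
      ≤ walkCount G 3 * t := by
  have hG := hx.one_le_sum_walkCount_div_add (fun v => by exact_mod_cast hdeg v) ht 3
  have hH := hy.sum_walkCount_div_le_one hst 4
  simp only [Finset.sum_range_succ, Finset.sum_range_zero, zero_add, h0, h1] at hG hH
  have ht2 : 0 < t - 2 := sub_pos.2 ht
  have hdiff : 0 ≤ walkCount G 2 / t ^ 3 + walkCount G 3 / (t ^ 3 * (t - 2))
      - (walkCount H 2 / t ^ 3 + walkCount H 3 / t ^ 4) := by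
    norm_num at hG hH
    linarith
  rw [← sub_nonneg]
  calc 0 ≤ t ^ 4 * (t - 2) * (walkCount G 2 / t ^ 3 + walkCount G 3 / (t ^ 3 * (t - 2))
          - (walkCount H 2 / t ^ 3 + walkCount H 3 / t ^ 4)) := by positivity
    _ = walkCount G 3 * t
          - ((walkCount H 2 - walkCount G 2) * t * (t - 2) + walkCount H 3 * (t - 2)) := by
        field_simp
        ring

lemma IsPerronVector.lt_of_degree_le_two (hx : IsPerronVector G t x) (hy : IsPerronVector H s y)
    (hG : G.IsTree) (hH : H.IsTree) (hcard : Fintype.card V = Fintype.card W)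
    (h3 : 3 ≤ Fintype.card V) (hdeg : ∀ v, G.degree v ≤ 2) {w : W} (hw : 3 ≤ H.degree w) :
    t < s := by
  classical
  by_contra! hst
  have : Nontrivial V := Fintype.one_lt_card_iff_nontrivial.1 (by omega)
  have hn : (3 : ℝ) ≤ Fintype.card V := by exact_mod_cast h3
  have ht := hx.card_add_one_le hG h3
  have hG2 := walkCount_two_of_degree_le_two hG hdeg
  have hG3 := walkCount_three_of_degree_le_two hG h3 hdeg
  have hH2 := le_walkCount_two_of_three_le_degree hH hw
  have hH3 := walkCount_two_add_le_walkCount_three hH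
  have hle := hx.walkCount_sub_mul_add_le_of_le hy hdeg (by linarith) hst
    (by rw [walkCount_zero, walkCount_zero, hcard])
    (by rw [walkCount_one_of_isTree hG, walkCount_one_of_isTree hH, hcard])
  rw [← hcard] at hH2 hH3
  set n := (Fintype.card V : ℝ)
  have hδ : (n + 2) * (n - 1) ≤ 8 * n - 16 := by
    have hW3 : (8 * n - 16 + (walkCount H 2 - walkCount G 2)) * (t - 2)
        ≤ walkCount H 3 * (t - 2) := by
      gcongr <;> linarith
    have h2 : 2 * ((t + 1) * (t - 2)) ≤ (walkCount H 2 - walkCount G 2) * ((t + 1) * (t - 2)) := by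
      gcongr
      · nlinarith
      · linarith
    have hmono : (n + 2) * (n - 1) ≤ (t + 1) * (t - 2) :=
      mul_le_mul (by linarith) (by linarith) (by linarith) (by linarith)
    rw [hG3] at hle
    linarith
  nlinarith [sq_nonneg (n - 7 / 2)]

end PathComparison

section ParentMap

variable {V W : Type*} {G : SimpleGraph V} {H : SimpleGraph W} {c : V} {d : W} {p : V → V}
  {q : W → W}

/-- `p` sends every vertex other than the root `c` to its parent, and the edges of `G` are exactly
the pairs `{v, p v}` with `v ≠ c`, each of them arising from a single `v`. The value `p c` is
irrelevant. -/
structure IsParentMap (G : SimpleGraph V) (c : V) (p : V → V) : Prop where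
  adj_iff : ∀ u v, G.Adj u v ↔ (u ≠ c ∧ p u = v) ∨ (v ≠ c ∧ p v = u)
  parent_parent_ne : ∀ v, v ≠ c → p v ≠ c → p (p v) ≠ v

lemma IsParentMap.adj_parent (hp : IsParentMap G c p) {v : V} (hv : v ≠ c) : G.Adj v (p v) :=
  (hp.adj_iff v (p v)).2 (.inl ⟨hv, rfl⟩)

lemma IsParentMap.exists_parent_ne (hp : IsParentMap G c p) (hG : ¬ HasDominatingEdge G) {u : V}
    (hu : u ≠ c) : ∃ w, w ≠ c ∧ p w ≠ c := by
  by_contra! h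
  have hadj {v : V} (hv : v ≠ c) : G.Adj c v := by
    simpa only [h v hv] using (hp.adj_parent hv).symm
  refine hG ⟨c, u, hadj hu, fun v => ?_⟩
  rcases eq_or_ne v c with rfl | hv
  · exact .inr (hadj hu).symm
  · exact .inl (hadj hv)

lemma isParentMap_of_dist_eq [Finite V] (hG : G.IsTree)
    (hp : ∀ v, v ≠ c → G.Adj v (p v) ∧ G.dist c v = G.dist c (p v) + 1) : IsParentMap G c p := by
  classical
  have := Fintype.ofFinite V
  have hne (v : V) (hv : v ≠ c) (hpv : p v ≠ c) : p (p v) ≠ v := fun h => by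
    have hdist := (hp (p v) hpv).2
    rw [h] at hdist
    have := (hp v hv).2
    omega
  have hinj (v w : V) (hv : v ∈ Finset.univ.erase c) (hw : w ∈ Finset.univ.erase c)
      (hvw : s(v, p v) = s(w, p w)) : v = w := by
    rcases Sym2.eq_iff.1 hvw with h | ⟨rfl, h⟩
    · exact h.1
    · exact absurd h (hne w (Finset.ne_of_mem_erase hw) (Finset.ne_of_mem_erase hv))
  have hcard : G.edgeFinset.card ≤ (Finset.univ.erase c).card := by
    rw [Finset.card_erase_of_mem (Finset.mem_univ c), Finset.card_univ, ← hG.card_edgeFinset,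
      Nat.add_sub_cancel]
  refine ⟨fun u v => ⟨fun huv => ?_, ?_⟩, hne⟩
  · obtain ⟨w, hw, hwuv⟩ := Finset.surj_on_of_inj_on_of_card_le (fun v _ => s(v, p v))
      (fun v hv => mem_edgeFinset.2 (hp v (Finset.ne_of_mem_erase hv)).1) hinj hcard s(u, v)
      (mem_edgeFinset.2 huv)
    have hwc := Finset.ne_of_mem_erase hw
    rcases Sym2.eq_iff.1 hwuv with ⟨rfl, h⟩ | ⟨h, rfl⟩
    · exact .inl ⟨hwc, h.symm⟩
    · exact .inr ⟨hwc, h.symm⟩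
  · rintro (⟨hu, rfl⟩ | ⟨hv, rfl⟩)
    · exact (hp u hu).1
    · exact (hp v hv).1.symm

lemma exists_isParentMap_of_isTree [Finite V] (hG : G.IsTree) (c : V) :
    ∃ p, IsParentMap G c p := by
  have hex (v : V) : ∃ p, v ≠ c → G.Adj v p ∧ G.dist c v = G.dist c p + 1 := by
    rcases eq_or_ne v c with hv | hv
    · exact ⟨v, fun h => absurd hv h⟩
    · obtain ⟨p, hp⟩ := exists_adj_dist_eq_dist_add_one hG.connected hv
      exact ⟨p, fun _ => hp⟩
  choose p hp using hex
  exact ⟨p, isParentMap_of_dist_eq hG hp⟩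

variable [DecidableRel G.Adj] [DecidableRel H.Adj]

lemma IsParentMap.adjMatrix_apply [DecidableEq V] (hp : IsParentMap G c p) (u v : V) :
    G.adjMatrix ℝ u v = (if u ≠ c ∧ p u = v then 1 else 0) + if v ≠ c ∧ p v = u then 1 else 0 := by
  have hne : ¬ ((u ≠ c ∧ p u = v) ∧ v ≠ c ∧ p v = u) := by
    rintro ⟨⟨hu, rfl⟩, hv, h⟩
    exact hp.parent_parent_ne u hu hv h
  rw [SimpleGraph.adjMatrix_apply, if_congr (hp.adj_iff u v) rfl rfl]
  split_ifs <;> simp_all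

lemma IsParentMap.dotProduct_adjMatrix_mulVec [Fintype V] [DecidableEq V] (hp : IsParentMap G c p)
    (y : V → ℝ) :
    y ⬝ᵥ G.adjMatrix ℝ *ᵥ y = 2 * ∑ v with v ≠ c, y v * y (p v) := by
  have hchild : ∑ u, ∑ v, (if u ≠ c ∧ p u = v then 1 else 0) * (y u * y v)
      = ∑ v with v ≠ c, y v * y (p v) := by
    simp only [ite_and, ite_mul, one_mul, zero_mul, Finset.sum_ite_irrel, Finset.sum_ite_eq,
      Finset.mem_univ, if_true, Finset.sum_const_zero, Finset.sum_filter]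
  have hparent : ∑ u, ∑ v, (if v ≠ c ∧ p v = u then 1 else 0) * (y u * y v)
      = ∑ v with v ≠ c, y v * y (p v) := by
    rw [Finset.sum_comm, ← hchild]
    exact Finset.sum_congr rfl fun u _ => Finset.sum_congr rfl fun v _ => by rw [mul_comm (y v)]
  simp only [dotProduct_mulVec_eq_sum, hp.adjMatrix_apply, add_mul, Finset.sum_add_distrib, hchild,
    hparent, two_mul]

lemma IsParentMap.dotProduct_adjMatrix_mulVec_le [Fintype V] [Fintype W] (hp : IsParentMap G c p)
    (hq : IsParentMap H d q) (σ : W ≃ V) (hσ : σ d = c) {y : V → ℝ} (hy : ∀ v, 0 ≤ y v)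
    (h : ∀ w, w ≠ d → y (p (σ w)) ≤ y (σ (q w))) :
    y ⬝ᵥ G.adjMatrix ℝ *ᵥ y ≤ (y ∘ σ) ⬝ᵥ H.adjMatrix ℝ *ᵥ (y ∘ σ) := by
  classical
  rw [hp.dotProduct_adjMatrix_mulVec, hq.dotProduct_adjMatrix_mulVec]
  gcongr 2 * ?_
  calc ∑ v with v ≠ c, y v * y (p v) = ∑ w with w ≠ d, y (σ w) * y (p (σ w)) := by
        refine (Finset.sum_equiv σ (fun w => ?_) fun _ _ => rfl).symm
        simp only [Finset.mem_filter_univ, ← hσ, σ.injective.ne_iff]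
    _ ≤ ∑ w with w ≠ d, (y ∘ σ) w * (y ∘ σ) (q w) := by
        refine Finset.sum_le_sum fun w hw => ?_
        exact mul_le_mul_of_nonneg_left (h w (Finset.mem_filter.1 hw).2) (hy _)

end ParentMap

section Broom

variable {n : ℕ}

lemma broom_adj (i j : Fin n) : (broom n).Adj i j ↔ i ≠ j ∧
    ((i : ℕ) = 0 ∧ (j : ℕ) = 1 ∨ (i : ℕ) = 2 ∧ (j : ℕ) ≠ 2 ∧ (j : ℕ) ≠ 0 ∨
      (j : ℕ) = 0 ∧ (i : ℕ) = 1 ∨ (j : ℕ) = 2 ∧ (i : ℕ) ≠ 2 ∧ (i : ℕ) ≠ 0) := by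
  rw [broom, fromRel_adj, or_assoc]

lemma hasDominatingEdge_broom (hn : 3 ≤ n) : HasDominatingEdge (broom n) := by
  refine ⟨⟨1, by omega⟩, ⟨2, by omega⟩, ?_, fun w => ?_⟩ <;> grind [broom_adj]

lemma connected_compl_broom (hn : 4 ≤ n) : (broom n)ᶜ.Connected := by
  let v0 : Fin n := ⟨0, by omega⟩
  let v3 : Fin n := ⟨3, by omega⟩
  have hadj {i : Fin n} (h0 : (i : ℕ) ≠ 0) (h1 : (i : ℕ) ≠ 1) : (broom n)ᶜ.Adj v0 i := by
    grind [compl_adj, broom_adj]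
  rw [connected_iff_exists_forall_reachable]
  refine ⟨v0, fun i => ?_⟩
  by_cases h0 : (i : ℕ) = 0
  · obtain rfl : v0 = i := Fin.ext h0.symm
    exact .rfl
  by_cases h1 : (i : ℕ) = 1
  · have h31 : (broom n)ᶜ.Adj v3 i := by grind [compl_adj, broom_adj]
    exact (hadj (by simp [v3]) (by simp [v3])).reachable.trans h31.reachable
  · exact (hadj h0 h1).reachable

lemma isParentMap_broom {a b c : Fin n} (ha : (a : ℕ) = 0) (hb : (b : ℕ) = 1) (hc : (c : ℕ) = 2) :
    IsParentMap (broom n) c fun i => if i = a then b else c := by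
  constructor
  · intro i j
    simp only [broom_adj, ne_eq, Fin.ext_iff]
    split_ifs <;> omega
  · intro i
    simp only [ne_eq, Fin.ext_iff]
    split_ifs <;> omega

end Broom

section BroomComparison

variable {V : Type*} [Fintype V] {G : SimpleGraph V} [DecidableRel G.Adj]

lemma IsPerronVector.mul_dotProduct_self {t : ℝ} {x : V → ℝ} (hx : IsPerronVector G t x) :
    t * (x ⬝ᵥ x) = 1 + x ⬝ᵥ G.adjMatrix ℝ *ᵥ x := by
  rw [← smul_eq_mul, ← dotProduct_smul, hx.smul_eq, dotProduct_add, dotProduct_comm, hx.sum_eq_one]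

lemma dotProduct_complDistMatrix_mulVec [DecidableEq V] (x : V → ℝ) :
    x ⬝ᵥ complDistMatrix G *ᵥ x = (1 ⬝ᵥ x) ^ 2 - x ⬝ᵥ x + x ⬝ᵥ G.adjMatrix ℝ *ᵥ x := by
  rw [complDistMatrix_mulVec, dotProduct_add, dotProduct_sub, dotProduct_smul, dotProduct_comm x 1,
    smul_eq_mul, sq]

lemma IsPerronVector.lt_of_dotProduct_adjMatrix_mulVec_le {n : ℕ} {H : SimpleGraph (Fin n)}
    [DecidableRel H.Adj] {l m : ℝ} {x : V → ℝ} (hx : IsPerronVector G (l + 1) x) (σ : Fin n ≃ V)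
    (hH : HasDominatingEdge H) (hc : Hᶜ.Connected)
    (hm : m ∈ upperBounds (spectrum ℝ (distMatrix Hᶜ)))
    (hle : x ⬝ᵥ G.adjMatrix ℝ *ᵥ x ≤ (x ∘ σ) ⬝ᵥ H.adjMatrix ℝ *ᵥ (x ∘ σ)) : l < m := by
  have hself : (x ∘ σ) ⬝ᵥ (x ∘ σ) = x ⬝ᵥ x := comp_equiv_dotProduct_comp_equiv x x σ
  have hsum : 1 ⬝ᵥ (x ∘ σ) = 1 := by
    rw [← hx.sum_eq_one, one_dotProduct, one_dotProduct]
    exact Equiv.sum_comp σ x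
  refine lt_of_mul_lt_mul_right ?_ (dotProduct_self_star_nonneg x)
  calc l * (x ⬝ᵥ x) = 1 - x ⬝ᵥ x + x ⬝ᵥ G.adjMatrix ℝ *ᵥ x := by
        linarith [hx.mul_dotProduct_self]
    _ ≤ 1 - (x ∘ σ) ⬝ᵥ (x ∘ σ) + (x ∘ σ) ⬝ᵥ H.adjMatrix ℝ *ᵥ (x ∘ σ) := by
        rw [hself]
        gcongr
    _ = (x ∘ σ) ⬝ᵥ complDistMatrix H *ᵥ (x ∘ σ) := by
        rw [dotProduct_complDistMatrix_mulVec, hsum, one_pow]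
    _ < (x ∘ σ) ⬝ᵥ distMatrix Hᶜ *ᵥ (x ∘ σ) :=
        hH.dotProduct_complDistMatrix_mulVec_lt hc fun i => hx.pos (σ i)
    _ ≤ m * ((x ∘ σ) ⬝ᵥ (x ∘ σ)) :=
        dotProduct_mulVec_le_of_mem_upperBounds_spectrum (isHermitian_distMatrix Hᶜ) hm _
    _ = m * (x ⬝ᵥ x) := by rw [hself]

lemma exists_perm_apply_eq {α : Type*} {a b c a' b' c' : α} (hab : a ≠ b) (hac : a ≠ c)
    (hbc : b ≠ c) (hab' : a' ≠ b') (hac' : a' ≠ c') (hbc' : b' ≠ c') :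
    ∃ σ : Equiv.Perm α, σ a = a' ∧ σ b = b' ∧ σ c = c' := by
  have hinj {u v w : α} (huv : u ≠ v) (huw : u ≠ w) (hvw : v ≠ w) :
      Function.Injective ![u, v, w] := by
    intro i j
    fin_cases i <;> fin_cases j <;> simp [huv, huw, hvw, huv.symm, huw.symm, hvw.symm]
  obtain ⟨σ, hσ⟩ := Equiv.Perm.exists_extending_pair _ _ (hinj hab hac hbc) (hinj hab' hac' hbc')
  exact ⟨σ, hσ 0, hσ 1, hσ 2⟩

variable {n : ℕ} {T : SimpleGraph (Fin n)} [DecidableRel T.Adj] [DecidableRel (broom n).Adj]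

lemma exists_perm_dotProduct_le_broom (hT : T.IsTree) (hdom : ¬ HasDominatingEdge T) (hn : 3 ≤ n)
    {x : Fin n → ℝ} (hx : ∀ v, 0 ≤ x v) :
    ∃ σ : Equiv.Perm (Fin n),
      x ⬝ᵥ T.adjMatrix ℝ *ᵥ x ≤ (x ∘ σ) ⬝ᵥ (broom n).adjMatrix ℝ *ᵥ (x ∘ σ) := by
  have : Nontrivial (Fin n) := Fin.nontrivial_iff_two_le.2 (by omega)
  obtain ⟨c, hc⟩ := Finite.exists_max x
  obtain ⟨u, hu⟩ := exists_ne c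
  obtain ⟨p, hp⟩ := exists_isParentMap_of_isTree hT c
  obtain ⟨w, hwc, hpw⟩ := hp.exists_parent_ne hdom hu
  let v0 : Fin n := ⟨0, by omega⟩
  let v1 : Fin n := ⟨1, by omega⟩
  let v2 : Fin n := ⟨2, by omega⟩
  obtain ⟨σ, h0, h1, h2⟩ := exists_perm_apply_eq (a := v0) (b := v1) (c := v2)
    (by simp [v0, v1]) (by simp [v0, v2]) (by simp [v1, v2]) (hp.adj_parent hwc).ne hwc hpw
  refine ⟨σ, hp.dotProduct_adjMatrix_mulVec_le (isParentMap_broom (a := v0) (b := v1) rfl rfl rfl)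
    σ h2 hx fun i _ => ?_⟩
  split_ifs with hi
  · rw [hi, h0, h1]
  · rw [h2]
    exact hc _

end BroomComparison

section Extremal

variable {n : ℕ} {T : SimpleGraph (Fin n)} {l m : ℝ}

lemma spectrum_distMatrix_compl_eq_of_iso {G H : SimpleGraph (Fin n)}
    (hG : ¬ HasDominatingEdge G) (e : G ≃g H) :
    spectrum ℝ (distMatrix Gᶜ) = spectrum ℝ (distMatrix Hᶜ) := by
  have hH : ¬ HasDominatingEdge H := fun h => hG (h.map_iso e.symm)
  have hM : distMatrix Hᶜ = reindexAlgEquiv ℝ ℝ e.toEquiv (distMatrix Gᶜ) := by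
    ext i j
    rw [distMatrix_compl_eq_complDistMatrix hG, distMatrix_compl_eq_complDistMatrix hH]
    have hadj : H.Adj i j ↔ G.Adj (e.toEquiv.symm i) (e.toEquiv.symm j) :=
      e.symm.map_adj_iff.symm
    by_cases h : H.Adj i j <;> simp [complDistMatrix, one_apply, ← hadj, h]
  rw [hM, AlgEquiv.spectrum_eq]

lemma lt_of_three_le_degree_of_isGreatest_spectrum_pathGraph (hT : T.IsTree)
    (hdom : ¬ HasDominatingEdge T) (hn : 5 ≤ n) {v : Fin n} (hv : 3 ≤ T.degree v)
    (hl : IsGreatest (spectrum ℝ (distMatrix (pathGraph n)ᶜ)) l)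
    (hm : IsGreatest (spectrum ℝ (distMatrix Tᶜ)) m) : l < m := by
  have : Nontrivial (Fin n) := Fin.nontrivial_iff_two_le.2 (by omega)
  obtain ⟨x, hx⟩ := exists_isPerronVector (not_hasDominatingEdge_pathGraph hn) hl
  obtain ⟨y, hy⟩ := exists_isPerronVector hdom hm
  have hlt := hx.lt_of_degree_le_two hy isTree_pathGraph hT rfl
    (by rw [Fintype.card_fin]; omega) degree_pathGraph_le_two hv
  linarith

lemma lt_of_isGreatest_spectrum_broom (hT : T.IsTree) (hdom : ¬ HasDominatingEdge T)
    (hn : 5 ≤ n) (hl : IsGreatest (spectrum ℝ (distMatrix Tᶜ)) l)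
    (hm : IsGreatest (spectrum ℝ (distMatrix (broom n)ᶜ)) m) : l < m := by
  obtain ⟨x, hx⟩ := exists_isPerronVector hdom hl
  obtain ⟨σ, hσ⟩ := exists_perm_dotProduct_le_broom hT hdom (by omega) fun v => (hx.pos v).le
  exact hx.lt_of_dotProduct_adjMatrix_mulVec_le σ (hasDominatingEdge_broom (by omega))
    (connected_compl_broom (by omega)) hm.2 hσ

end Extremal

/-- Among all trees `T` on `n` vertices with diameter `> 3`, the distance spectral
radius of the complement is minimized exactly by the path `P_n` and maximized
exactly by `T(n-3,1)`. -/
theorem stmt9 {n : ℕ} (T : SimpleGraph (Fin n))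
    (hT : T.IsTree) (hd : ∃ u v : Fin n, 3 < T.dist u v)
    (lamP lamT lamB : ℝ)
    (hlamP : IsGreatest (spectrum ℝ (distMatrix (pathGraph n)ᶜ)) lamP)
    (hlamT : IsGreatest (spectrum ℝ (distMatrix Tᶜ)) lamT)
    (hlamB : IsGreatest (spectrum ℝ (distMatrix (broom n)ᶜ)) lamB) :
    lamP ≤ lamT ∧ lamT ≤ lamB ∧
      (lamP = lamT ↔ Nonempty (T ≃g pathGraph n)) ∧
      (lamT = lamB ↔ Nonempty (T ≃g broom n)) := by
  obtain ⟨u, v, huv⟩ := hd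
  have hn : 5 ≤ n := by
    have := dist_lt_card hT.connected u v
    rw [Fintype.card_fin] at this
    omega
  have hdom : ¬ HasDominatingEdge T := fun h => huv.not_ge (h.dist_le_three u v)
  have hB : lamT < lamB := lt_of_isGreatest_spectrum_broom hT hdom hn hlamT hlamB
  have hBiso : ¬ Nonempty (T ≃g broom n) := fun ⟨e⟩ =>
    hdom ((hasDominatingEdge_broom (by omega)).map_iso e.symm)
  have hPiso (e : Nonempty (T ≃g pathGraph n)) : lamP = lamT :=
    e.elim fun e => hlamP.unique (spectrum_distMatrix_compl_eq_of_iso hdom e ▸ hlamT)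
  by_cases hdeg : ∀ v, T.degree v ≤ 2
  · have : Nontrivial (Fin n) := Fin.nontrivial_iff_two_le.2 (by omega)
    have e := nonempty_iso_pathGraph_of_isTree hT hdeg
    rw [Fintype.card_fin] at e
    exact ⟨(hPiso e).le, hB.le, iff_of_true (hPiso e) e, iff_of_false hB.ne hBiso⟩
  · obtain ⟨w, hw⟩ := not_forall.1 hdeg
    have hP : lamP < lamT := lt_of_three_le_degree_of_isGreatest_spectrum_pathGraph hT hdom hn
      (not_le.1 hw) hlamP hlamT
    exact ⟨hP.le, hB.le, iff_of_false hP.ne (mt hPiso hP.ne), iff_of_false hB.ne hBiso⟩
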